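/- arXiv:2511.17121 — 2 statements merged into one kernel-verified Lean document; each statement's English description precedes it below -/
import Mathlib

section
/- Existence and uniqueness for the coupled Riccati system: for any coefficient datum (A, B, C, Q, R, m, P) as described, the coupled Riccati terminal value problem admits a solution K on [0,T], and the solution is unique: if K and K' both take symmetric values, are differentiable in t, satisfy the Riccati equations −K̇(t,i) = C(i)ᵀK(t,i)C(i) + A(i)ᵀK(t,i) + K(t,i)A(i) − K(t,i)B(i)R(i)⁻¹B(i)ᵀK(t,i) + Q(i) + Σ_{j∈S} m_{ij}K(t,j) on [0,T] for every i ∈ S, and satisfy K(T,i) = K'(T,i) = P(i), then K(t,i) = K'(t,i) for all t ∈ [0,T] and i ∈ S. -/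
open Matrix Set Filter Topology

attribute [local instance] Matrix.normedAddCommGroup Matrix.normedSpace

noncomputable section

/-- Right-hand side of the coupled Riccati system associated with a coefficient
datum `(A, B, C, Q, R, m)`, evaluated at the tuple of matrices `K : Fin N → Matrix`. -/
def riccatiRHS {d l N : ℕ}
    (A C : Fin N → Matrix (Fin d) (Fin d) ℝ)
    (B : Fin N → Matrix (Fin d) (Fin l) ℝ)
    (Q : Fin N → Matrix (Fin d) (Fin d) ℝ)
    (R : Fin N → Matrix (Fin l) (Fin l) ℝ)
    (m : Fin N → Fin N → ℝ)
    (K : Fin N → Matrix (Fin d) (Fin d) ℝ) (i : Fin N) :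
    Matrix (Fin d) (Fin d) ℝ :=
  (C i)ᵀ * K i * C i + (A i)ᵀ * K i + K i * A i
    - K i * B i * (R i)⁻¹ * (B i)ᵀ * K i + Q i + ∑ j, m i j • K j

/-- `K : ℝ → Fin N → Matrix` is a solution on `[0,T]` of the coupled Riccati
terminal value problem: it takes symmetric values, is differentiable in `t` with
`−K̇(t,i)` equal to the Riccati right-hand side, and satisfies `K(T,i) = P i`. -/
def IsRiccatiSolution {d l N : ℕ} (T : ℝ)
    (A C : Fin N → Matrix (Fin d) (Fin d) ℝ)
    (B : Fin N → Matrix (Fin d) (Fin l) ℝ)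
    (Q : Fin N → Matrix (Fin d) (Fin d) ℝ)
    (R : Fin N → Matrix (Fin l) (Fin l) ℝ)
    (m : Fin N → Fin N → ℝ)
    (P : Fin N → Matrix (Fin d) (Fin d) ℝ)
    (K : ℝ → Fin N → Matrix (Fin d) (Fin d) ℝ) : Prop :=
  (∀ t ∈ Icc (0:ℝ) T, ∀ i, (K t i).IsSymm) ∧
  (∀ t ∈ Icc (0:ℝ) T, ∀ i,
    HasDerivWithinAt (fun s => K s i)
      (-(riccatiRHS A C B Q R m (K t) i)) (Icc (0:ℝ) T) t) ∧
  (∀ i, K T i = P i)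

/-! ### Initial value problems for continuously differentiable vector fields -/

section VectorField

variable {E : Type*} [NormedAddCommGroup E] [NormedSpace ℝ E]

/-- Reversing time changes the sign of the derivative. -/
theorem hasDerivWithinAt_comp_const_sub {T t : ℝ} {x : ℝ → E} {x' : E}
    (hx : HasDerivWithinAt x x' (Icc 0 T) (T - t)) :
    HasDerivWithinAt (fun s => x (T - s)) (-x') (Icc 0 T) t := by
  have h := hx.scomp (h := fun s => T - s) t (((hasDerivAt_id t).const_sub T).hasDerivWithinAt)
    (s := Icc 0 T) fun s hs => ⟨sub_nonneg.2 hs.2, sub_le_self T hs.1⟩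
  rwa [neg_one_smul] at h

/-- A function whose values before `t` are at least its value at `t` has nonpositive derivative
from the left at `t`. -/
theorem deriv_nonpos_of_le_left {g : ℝ → ℝ} {g' t : ℝ} (ht : 0 < t)
    (hg : HasDerivWithinAt g g' (Icc 0 t) t) (hle : ∀ s ∈ Ico 0 t, g t ≤ g s) : g' ≤ 0 := by
  have h : HasDerivWithinAt g g' (Iio t) t := hg.mono_of_mem_nhdsWithin
    (mem_of_superset (Ico_mem_nhdsLT ht) Ico_subset_Icc_self)
  refine le_of_tendsto ((hasDerivWithinAt_iff_tendsto_slope' self_notMem_Iio).1 h) ?_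
  filter_upwards [Ico_mem_nhdsLT ht] with s hs
  rw [slope_def_field]
  exact div_nonpos_of_nonneg_of_nonpos (sub_nonneg.2 (hle s hs)) (sub_nonpos.2 hs.2.le)

variable [FiniteDimensional ℝ E]

/-- Two solutions of `x' = θ t • F x` on `[0, T]` with the same initial value agree if `F` is
continuously differentiable and `0 ≤ θ ≤ 1`. -/
theorem eqOn_of_hasDerivWithinAt_smul {F : E → E} (hF : ContDiff ℝ 1 F) {T : ℝ} {θ : ℝ → ℝ}
    (hθ : ∀ t, θ t ∈ Icc (0 : ℝ) 1) {x y : ℝ → E}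
    (hx : ∀ t ∈ Icc 0 T, HasDerivWithinAt x (θ t • F (x t)) (Icc 0 T) t)
    (hy : ∀ t ∈ Icc 0 T, HasDerivWithinAt y (θ t • F (y t)) (Icc 0 T) t)
    (h0 : x 0 = y 0) : EqOn x y (Icc 0 T) := by
  have hxc : ContinuousOn x (Icc 0 T) := fun t ht => (hx t ht).continuousWithinAt
  have hyc : ContinuousOn y (Icc 0 T) := fun t ht => (hy t ht).continuousWithinAt
  obtain ⟨a, ha⟩ := isCompact_Icc.exists_bound_of_continuousOn hxc
  obtain ⟨b, hb⟩ := isCompact_Icc.exists_bound_of_continuousOn hyc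
  obtain ⟨k, hk⟩ := hF.contDiffOn.exists_lipschitzOnWith one_ne_zero
    (convex_closedBall (0 : E) (max a b)) (isCompact_closedBall _ _)
  have right : ∀ t ∈ Ico 0 T, Icc 0 T ∈ 𝓝[Ici t] t := fun t ht => Icc_mem_nhdsGE_of_mem ht
  refine ODE_solution_unique_of_mem_Icc_right (v := fun t z => θ t • F z) (K := k)
    (s := fun _ => Metric.closedBall 0 (max a b)) ?_ hxc
    (fun t ht => (hx t (Ico_subset_Icc_self ht)).mono_of_mem_nhdsWithin (right t ht)) ?_ hyc
    (fun t ht => (hy t (Ico_subset_Icc_self ht)).mono_of_mem_nhdsWithin (right t ht)) ?_ h0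
  · intro t _
    refine LipschitzOnWith.of_dist_le_mul fun z hz w hw => ?_
    rw [dist_smul₀, Real.norm_of_nonneg (hθ t).1]
    exact (mul_le_of_le_one_left dist_nonneg (hθ t).2).trans (hk.dist_le_mul z hz w hw)
  · intro t ht
    simpa using Or.inl (ha t (Ico_subset_Icc_self ht))
  · intro t ht
    simpa using Or.inr (hb t (Ico_subset_Icc_self ht))

/-- If all solutions of the slowed-down equations `x' = θ t • F x` with `0 ≤ θ ≤ 1` and initial
value `x₀` obey a common bound on `[0, T]`, then `x' = F x` has a solution on `[0, T]`. -/
theorem exists_solution_of_forall_norm_le {F : E → E} (hF : ContDiff ℝ 1 F) {T : ℝ} (hT : 0 ≤ T)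
    {x₀ : E} {M : ℝ}
    (hM : ∀ (θ : ℝ → ℝ) (x : ℝ → E), (∀ t, θ t ∈ Icc (0 : ℝ) 1) → x 0 = x₀ →
      (∀ t ∈ Icc 0 T, HasDerivWithinAt x (θ t • F (x t)) (Icc 0 T) t) →
      ∀ t ∈ Icc 0 T, ‖x t‖ ≤ M) :
    ∃ x : ℝ → E, x 0 = x₀ ∧ ∀ t ∈ Icc 0 T, HasDerivWithinAt x (F (x t)) (Icc 0 T) t := by
  let φ : ContDiffBump (0 : E) := ⟨max M 1, max M 1 + 1, by positivity, by simp⟩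
  have hG : ContDiff ℝ 1 fun z => φ z • F z := φ.contDiff.smul hF
  have hGs : HasCompactSupport fun z => φ z • F z := φ.hasCompactSupport.smul_right
  obtain ⟨k, hk⟩ := hG.lipschitzWith_of_hasCompactSupport hGs one_ne_zero
  obtain ⟨L, hL⟩ := hGs.exists_bound_of_continuous hG.continuous
  have hL0 : 0 ≤ L := (norm_nonneg _).trans (hL 0)
  obtain ⟨x, hx0, hx⟩ := (IsPicardLindelof.of_time_independent (f := fun z => φ z • F z)
    (tmin := 0) (tmax := T) (t₀ := ⟨0, left_mem_Icc.2 hT⟩) (x₀ := x₀) (a := ⟨L * T, by positivity⟩)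
    (r := 0) (L := ⟨L, hL0⟩) (fun z _ => hL z) hk.lipschitzOnWith
    (by
      simp only [sub_zero, sub_self, max_eq_left hT]
      exact (sub_zero (L * T)).ge)).exists_eq_forall_mem_Icc_hasDerivWithinAt₀
  refine ⟨x, hx0, fun t ht => ?_⟩
  have hb := hM (fun t => φ (x t)) x (fun t => ⟨φ.nonneg, φ.le_one⟩) hx0 hx t ht
  have h1 : φ (x t) = 1 := φ.one_of_mem_closedBall (by simpa [φ] using Or.inl hb)
  simpa [h1] using hx t ht

theorem HasDerivWithinAt.linearMap_comp (f : E →ₗ[ℝ] ℝ) {x : ℝ → E} {x' : E} {s : Set ℝ} {t : ℝ}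
    (hx : HasDerivWithinAt x x' s t) : HasDerivWithinAt (fun r => f (x r)) (f x') s t :=
  (LinearMap.toContinuousLinearMap f).hasFDerivAt.comp_hasDerivWithinAt t hx

theorem LinearMap.exists_apply_le_mul_norm (f : E →ₗ[ℝ] ℝ) :
    ∃ k, 0 ≤ k ∧ ∀ x, f x ≤ k * ‖x‖ :=
  ⟨‖LinearMap.toContinuousLinearMap f‖, norm_nonneg _, fun x =>
    (le_abs_self _).trans ((LinearMap.toContinuousLinearMap f).le_opNorm x)⟩

end VectorField

/-! ### Quadratic forms of real matrices -/

section Matrices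

variable {d N : ℕ}

theorem isCompact_setOf_dotProduct_self_eq_one :
    IsCompact {v : Fin d → ℝ | v ⬝ᵥ v = 1} := by
  refine Metric.isCompact_of_isClosed_isBounded
    (isClosed_eq (by fun_prop) continuous_const) ?_
  refine (Metric.isBounded_closedBall (x := (0 : Fin d → ℝ)) (r := 1)).subset fun v hv => ?_
  rw [mem_closedBall_zero_iff, pi_norm_le_iff_of_nonneg zero_le_one]
  intro a
  have h : v a * v a ≤ v ⬝ᵥ v :=
    Finset.single_le_sum (f := fun b => v b * v b) (fun b _ => mul_self_nonneg _)
      (Finset.mem_univ a)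
  rw [Real.norm_eq_abs, ← sq_le_one_iff_abs_le_one, sq]
  exact h.trans_eq hv

theorem continuous_dotProduct_mulVec_self :
    Continuous fun p : Matrix (Fin d) (Fin d) ℝ × (Fin d → ℝ) => p.2 ⬝ᵥ p.1 *ᵥ p.2 :=
  continuous_snd.dotProduct (continuous_fst.matrix_mulVec continuous_snd)

theorem continuous_dotProduct_mulVec_self_of_finite (M : Fin N → Matrix (Fin d) (Fin d) ℝ) :
    Continuous fun p : Fin N × (Fin d → ℝ) => p.2 ⬝ᵥ M p.1 *ᵥ p.2 :=
  continuous_dotProduct_mulVec_self.comp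
    ((continuous_of_discreteTopology.comp continuous_fst).prodMk continuous_snd)

/-- The value at `v` of the quadratic form of a matrix, as a linear map in the matrix. -/
def quadraticValue (v : Fin d → ℝ) : Matrix (Fin d) (Fin d) ℝ →ₗ[ℝ] ℝ where
  toFun M := v ⬝ᵥ M *ᵥ v
  map_add' M M' := by rw [add_mulVec, dotProduct_add]
  map_smul' r M := by rw [smul_mulVec, dotProduct_smul, RingHom.id_apply]

/-- A lower bound for a quadratic form on unit vectors extends to all vectors. -/
theorem mul_dotProduct_self_le_of_unit {M : Matrix (Fin d) (Fin d) ℝ} {η : ℝ}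
    (h : ∀ v : Fin d → ℝ, v ⬝ᵥ v = 1 → η ≤ v ⬝ᵥ M *ᵥ v) (w : Fin d → ℝ) :
    η * (w ⬝ᵥ w) ≤ w ⬝ᵥ M *ᵥ w := by
  rcases eq_or_ne w 0 with rfl | hw
  · simp
  have hpos : 0 < w ⬝ᵥ w := by simpa using dotProduct_star_self_pos_iff.2 hw
  have hs : √(w ⬝ᵥ w) * √(w ⬝ᵥ w) = w ⬝ᵥ w := Real.mul_self_sqrt hpos.le
  have hs0 : √(w ⬝ᵥ w) ≠ 0 := (Real.sqrt_pos.2 hpos).ne'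
  have key := h ((√(w ⬝ᵥ w))⁻¹ • w) (by
    simp only [smul_dotProduct, dotProduct_smul, smul_eq_mul]
    rw [← mul_assoc, ← mul_inv, hs, inv_mul_cancel₀ hpos.ne'])
  simp only [smul_dotProduct, dotProduct_smul, mulVec_smul, smul_eq_mul] at key
  rwa [← mul_assoc, ← mul_inv, hs, ← div_eq_inv_mul, le_div_iff₀ hpos] at key

theorem abs_apply_le_trace {M : Matrix (Fin d) (Fin d) ℝ} (hM : M.PosSemidef) (a b : Fin d) :
    |M a b| ≤ M.trace := by
  have hd : ∀ c, M c c ≤ M.trace := fun c =>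
    Finset.single_le_sum (f := fun c => M c c) (fun c _ => hM.diag_nonneg) (Finset.mem_univ c)
  have hs : M b a = M a b := by simpa using hM.1.apply a b
  have h₁ := hM.dotProduct_mulVec_nonneg (Pi.single a 1 + Pi.single b 1)
  have h₂ := hM.dotProduct_mulVec_nonneg (Pi.single a 1 - Pi.single b 1)
  simp [mulVec_add, mulVec_sub, add_dotProduct, sub_dotProduct, dotProduct_add,
    dotProduct_sub, hs] at h₁ h₂
  have ha := hd a
  have hb := hd b
  rw [abs_le]
  constructor <;> linarith

/-- The norm of a tuple of positive semidefinite matrices is bounded by its total trace. -/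
theorem norm_le_sum_trace {x : Fin N → Matrix (Fin d) (Fin d) ℝ} (hx : ∀ i, (x i).PosSemidef) :
    ‖x‖ ≤ ∑ i, (x i).trace := by
  have h0 : ∀ i, 0 ≤ (x i).trace := fun i => (hx i).trace_nonneg
  have hsum : 0 ≤ ∑ i, (x i).trace := Finset.sum_nonneg fun i _ => h0 i
  refine (pi_norm_le_iff_of_nonneg hsum).2 fun i => (Matrix.norm_le_iff hsum).2 fun a b => ?_
  exact (abs_apply_le_trace (hx i) a b).trans
    (Finset.single_le_sum (f := fun i => (x i).trace) (fun i _ => h0 i) (Finset.mem_univ i))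

end Matrices

/-! ### The Riccati vector field -/

section Riccati

variable {d l N : ℕ} {A C Q : Fin N → Matrix (Fin d) (Fin d) ℝ}
  {B : Fin N → Matrix (Fin d) (Fin l) ℝ} {R : Fin N → Matrix (Fin l) (Fin l) ℝ}
  {m : Fin N → Fin N → ℝ}

theorem contDiff_riccatiRHS : ContDiff ℝ 1 (riccatiRHS A C B Q R m) := by
  have happ : ∀ i a b, ContDiff ℝ 1 fun K : Fin N → Matrix (Fin d) (Fin d) ℝ => K i a b :=
    fun i a b => contDiff_apply_apply ℝ ℝ a b |>.comp (contDiff_apply ℝ (Fin d → Fin d → ℝ) i)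
  refine contDiff_pi.2 fun i => contDiff_pi.2 fun a => contDiff_pi.2 fun b => ?_
  simp only [riccatiRHS, Matrix.add_apply, Matrix.sub_apply, Matrix.mul_apply, Matrix.sum_apply,
    Matrix.smul_apply, smul_eq_mul]
  fun_prop

theorem riccatiRHS_transpose (hQ : ∀ i, (Q i).PosSemidef) (hR : ∀ i, (R i).PosDef)
    (K : Fin N → Matrix (Fin d) (Fin d) ℝ) (i : Fin N) :
    (riccatiRHS A C B Q R m K i)ᵀ = riccatiRHS A C B Q R m (fun j => (K j)ᵀ) i := by
  have hQt : (Q i)ᵀ = Q i := by simpa using (hQ i).1.eq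
  have hRt : (R i)ᵀ = R i := by simpa using (hR i).1.eq
  simp only [riccatiRHS, transpose_add, transpose_sub, transpose_mul, transpose_sum,
    transpose_smul, transpose_transpose, transpose_nonsing_inv, hQt, hRt, Matrix.mul_assoc]
  abel

/-- Curves solving the slowed-down equation from symmetric initial data stay symmetric. -/
theorem isSymm_of_hasDerivWithinAt (hQ : ∀ i, (Q i).PosSemidef) (hR : ∀ i, (R i).PosDef)
    {T : ℝ} {θ : ℝ → ℝ} (hθ : ∀ t, θ t ∈ Icc (0 : ℝ) 1)
    {x : ℝ → Fin N → Matrix (Fin d) (Fin d) ℝ}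
    (hx : ∀ t ∈ Icc 0 T,
      HasDerivWithinAt x (θ t • riccatiRHS A C B Q R m (x t)) (Icc 0 T) t)
    (h0 : ∀ i, (x 0 i).IsSymm) {t : ℝ} (ht : t ∈ Icc 0 T) (i : Fin N) : (x t i).IsSymm := by
  have hxt : ∀ t ∈ Icc 0 T, HasDerivWithinAt (fun s j => (x s j)ᵀ)
      (θ t • riccatiRHS A C B Q R m fun j => (x t j)ᵀ) (Icc 0 T) t := by
    intro t ht
    refine hasDerivWithinAt_pi.2 fun j => hasDerivWithinAt_pi.2 fun a =>
      hasDerivWithinAt_pi.2 fun b => ?_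
    have h := hasDerivWithinAt_pi.1
      (hasDerivWithinAt_pi.1 (hasDerivWithinAt_pi.1 (hx t ht) j) b) a
    rw [Pi.smul_apply, ← riccatiRHS_transpose hQ hR]
    exact h
  exact congrFun (eqOn_of_hasDerivWithinAt_smul contDiff_riccatiRHS hθ hxt hx
    (funext fun j => h0 j) ht) i

/-- The Riccati vector field points into the cone `{x | ∀ j, η I ≤ x j}` up to an error
proportional to `η`. -/
theorem neg_mul_le_dotProduct_riccatiRHS (hQ : ∀ i, (Q i).PosSemidef) (hR : ∀ i, (R i).PosDef)
    (hm₁ : ∀ i j, i ≠ j → 0 ≤ m i j) (hm₂ : ∀ i, ∑ j, m i j = 0)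
    {x : Fin N → Matrix (Fin d) (Fin d) ℝ} {η c : ℝ} (hη0 : 0 ≤ η) (hη1 : η ≤ 1)
    (hx : ∀ j w, η * (w ⬝ᵥ w) ≤ w ⬝ᵥ x j *ᵥ w) {i : Fin N} (hs : (x i).IsSymm)
    {v : Fin d → ℝ} (hv : v ⬝ᵥ v = 1) (hxv : x i *ᵥ v = η • v)
    (hc : -c ≤ v ⬝ᵥ ((2 : ℝ) • A i - B i * (R i)⁻¹ * (B i)ᵀ) *ᵥ v) :
    -(c * η) ≤ v ⬝ᵥ riccatiRHS A C B Q R m x i *ᵥ v := by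
  have hvx : v ᵥ* x i = η • v := by rw [← hxv, ← vecMul_transpose, hs.eq]
  have hC : 0 ≤ v ⬝ᵥ ((C i)ᵀ * x i * C i) *ᵥ v := by
    have h := hx i (C i *ᵥ v)
    have h0 : 0 ≤ C i *ᵥ v ⬝ᵥ C i *ᵥ v := by simpa using dotProduct_star_self_nonneg (C i *ᵥ v)
    rw [← mulVec_mulVec, ← mulVec_mulVec, dotProduct_mulVec, vecMul_transpose]
    exact (mul_nonneg hη0 h0).trans h
  have hA₁ : v ⬝ᵥ ((A i)ᵀ * x i) *ᵥ v = η * (v ⬝ᵥ A i *ᵥ v) := by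
    rw [← mulVec_mulVec, hxv, mulVec_smul, dotProduct_smul, dotProduct_mulVec, vecMul_transpose,
      dotProduct_comm, smul_eq_mul]
  have hA₂ : v ⬝ᵥ (x i * A i) *ᵥ v = η * (v ⬝ᵥ A i *ᵥ v) := by
    rw [← mulVec_mulVec, dotProduct_mulVec, hvx, smul_dotProduct, smul_eq_mul]
  have hS : v ⬝ᵥ (x i * B i * (R i)⁻¹ * (B i)ᵀ * x i) *ᵥ v
      = η * (η * (v ⬝ᵥ (B i * (R i)⁻¹ * (B i)ᵀ) *ᵥ v)) := by
    rw [show x i * B i * (R i)⁻¹ * (B i)ᵀ * x i = x i * ((B i * (R i)⁻¹ * (B i)ᵀ) * x i) by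
      simp only [Matrix.mul_assoc], ← mulVec_mulVec, dotProduct_mulVec, hvx, smul_dotProduct,
      ← mulVec_mulVec, hxv, mulVec_smul, dotProduct_smul, smul_eq_mul, smul_eq_mul]
  have hS0 : 0 ≤ v ⬝ᵥ (B i * (R i)⁻¹ * (B i)ᵀ) *ᵥ v := by
    simpa using ((hR i).inv.posSemidef.mul_mul_conjTranspose_same (B i)).dotProduct_mulVec_nonneg v
  have hQ0 : 0 ≤ v ⬝ᵥ Q i *ᵥ v := by simpa using (hQ i).dotProduct_mulVec_nonneg v
  have hm : 0 ≤ v ⬝ᵥ (∑ j, m i j • x j) *ᵥ v := by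
    rw [sum_mulVec, dotProduct_sum]
    calc (0 : ℝ) = ∑ j, m i j * η := by rw [← Finset.sum_mul, hm₂, zero_mul]
      _ ≤ ∑ j, v ⬝ᵥ (m i j • x j) *ᵥ v := by
        refine Finset.sum_le_sum fun j _ => ?_
        rw [smul_mulVec, dotProduct_smul, smul_eq_mul]
        rcases eq_or_ne i j with rfl | hij
        · rw [hxv, dotProduct_smul, hv, smul_eq_mul, mul_one]
        · have h := hx j v
          rw [hv, mul_one] at h
          exact mul_le_mul_of_nonneg_left h (hm₁ i j hij)
  simp only [riccatiRHS, add_mulVec, sub_mulVec, dotProduct_add, dotProduct_sub]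
  rw [hA₁, hA₂, hS]
  rw [sub_mulVec, smul_mulVec, dotProduct_sub, dotProduct_smul, smul_eq_mul] at hc
  have h₁ := mul_le_mul_of_nonneg_left hc hη0
  have h₂ := mul_nonneg (mul_nonneg hη0 (sub_nonneg.2 hη1)) hS0
  linarith

/-- Curves solving the slowed-down equation from positive definite initial data stay positive
semidefinite. -/
theorem posSemidef_of_hasDerivWithinAt (hQ : ∀ i, (Q i).PosSemidef) (hR : ∀ i, (R i).PosDef)
    (hm₁ : ∀ i j, i ≠ j → 0 ≤ m i j) (hm₂ : ∀ i, ∑ j, m i j = 0)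
    {T : ℝ} {θ : ℝ → ℝ} (hθ : ∀ t, θ t ∈ Icc (0 : ℝ) 1)
    {x : ℝ → Fin N → Matrix (Fin d) (Fin d) ℝ}
    (hx : ∀ t ∈ Icc 0 T,
      HasDerivWithinAt x (θ t • riccatiRHS A C B Q R m (x t)) (Icc 0 T) t)
    (h0 : ∀ i, (x 0 i).PosDef) {t : ℝ} (ht : t ∈ Icc 0 T) (i : Fin N) :
    (x t i).PosSemidef := by
  have hsymm : ∀ t ∈ Icc 0 T, ∀ i, (x t i).IsSymm := fun t ht i =>
    isSymm_of_hasDerivWithinAt hQ hR hθ hx (fun j => isHermitian_iff_isSymm.1 (h0 j).1) ht i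
  have hsphere := (isCompact_univ (X := Fin N)).prod
    (isCompact_setOf_dotProduct_self_eq_one (d := d))
  obtain ⟨δ₀, hδ₀, hδ₀'⟩ := hsphere.exists_forall_le' (a := 0)
    (continuous_dotProduct_mulVec_self_of_finite (x 0)).continuousOn (by
      rintro ⟨j, v⟩ ⟨-, hv⟩
      have hv0 : v ≠ 0 := by rintro rfl; simp at hv
      simpa using (h0 j).dotProduct_mulVec_pos hv0)
  obtain ⟨c₀, hc₀⟩ := hsphere.exists_bound_of_continuousOn
    (continuous_dotProduct_mulVec_self_of_finite
      fun j => (2 : ℝ) • A j - B j * (R j)⁻¹ * (B j)ᵀ).continuousOn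
  obtain ⟨c, hc0, hc⟩ : ∃ c, 0 ≤ c ∧ ∀ (j : Fin N) (v : Fin d → ℝ), v ⬝ᵥ v = 1 →
      -c ≤ v ⬝ᵥ ((2 : ℝ) • A j - B j * (R j)⁻¹ * (B j)ᵀ) *ᵥ v :=
    ⟨max c₀ 0, le_max_right _ _, fun j v hv =>
      (abs_le.1 ((hc₀ (j, v) ⟨mem_univ _, hv⟩).trans (le_max_left _ _))).1⟩
  obtain ⟨δ, hδ, hδ1, hδlt⟩ : ∃ δ, 0 < δ ∧ δ ≤ 1 ∧ δ < δ₀ := by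
    refine ⟨min δ₀ 1 / 2, by positivity, ?_, ?_⟩
    · linarith [min_le_right δ₀ 1]
    · linarith [min_le_left δ₀ 1]
  set η : ℝ → ℝ := fun s => δ * Real.exp (-(c + 1) * s) with hη
  have hηpos : ∀ s, 0 < η s := fun s => by positivity
  have hηcont : Continuous η := by fun_prop
  have hηderiv : ∀ s, HasDerivAt η (-(c + 1) * η s) s := fun s => by
    have h := (((hasDerivAt_id s).const_mul (-(c + 1))).exp).const_mul δ
    refine h.congr_deriv ?_
    simp only [hη, id]
    ring
  have hxc : ContinuousOn x (Icc 0 T) := fun s hs => (hx s hs).continuousWithinAt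
  have hform : ∀ (j : Fin N) (v : Fin d → ℝ),
      ContinuousOn (fun s => v ⬝ᵥ x s j *ᵥ v) (Icc 0 T) := fun j v =>
    continuous_dotProduct_mulVec_self.comp_continuousOn
      (((continuous_apply j).comp_continuousOn hxc).prodMk continuousOn_const)
  have claim : ∀ s ∈ Icc 0 T, ∀ (j : Fin N) (v : Fin d → ℝ), v ⬝ᵥ v = 1 →
      η s < v ⬝ᵥ x s j *ᵥ v := by
    by_contra! hcon
    -- the first time at which the barrier is touched
    obtain ⟨s, hs, i, v, hv, hle, hfirst⟩ : ∃ s ∈ Icc 0 T, ∃ (i : Fin N) (v : Fin d → ℝ),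
        v ⬝ᵥ v = 1 ∧ v ⬝ᵥ x s i *ᵥ v ≤ η s ∧ ∀ r ∈ Ico 0 s, ∀ (j : Fin N) (w : Fin d → ℝ),
          w ⬝ᵥ w = 1 → η r < w ⬝ᵥ x r j *ᵥ w := by
      have hK := isCompact_Icc (a := (0 : ℝ)) (b := T) |>.prod hsphere
      have hcont : ContinuousOn (fun p : ℝ × Fin N × (Fin d → ℝ) =>
          p.2.2 ⬝ᵥ x p.1 p.2.1 *ᵥ p.2.2 - η p.1) (Icc 0 T ×ˢ univ ×ˢ {v | v ⬝ᵥ v = 1}) := by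
        refine ContinuousOn.sub (continuous_dotProduct_mulVec_self.comp_continuousOn
          (ContinuousOn.prodMk ?_ (by fun_prop))) (by fun_prop)
        have h1 : Continuous fun p : (Fin N → Matrix (Fin d) (Fin d) ℝ) × Fin N => p.1 p.2 :=
          continuous_prod_of_discrete_right.2 fun j => continuous_apply j
        exact h1.comp_continuousOn ((hxc.comp continuousOn_fst fun p hp => hp.1).prodMk
          (by fun_prop))
      have hZ := hcont.preimage_isClosed_of_isClosed hK.isClosed (isClosed_Iic (a := (0 : ℝ)))
      obtain ⟨t₁, ht₁, j₁, v₁, hv₁, hle₁⟩ := hcon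
      obtain ⟨⟨s, i, v⟩, ⟨⟨hs, -, hv⟩, hle⟩, hmin⟩ :=
        (hK.of_isClosed_subset hZ inter_subset_left).exists_isMinOn
          ⟨(t₁, j₁, v₁), ⟨ht₁, mem_univ _, hv₁⟩, sub_nonpos.2 hle₁⟩ continuousOn_fst
      refine ⟨s, hs, i, v, hv, sub_nonpos.1 hle, fun r hr j w hw => ?_⟩
      by_contra! hlt
      exact hr.2.not_ge (hmin (a := (r, j, w))
        ⟨⟨⟨hr.1, hr.2.le.trans hs.2⟩, mem_univ _, hw⟩, sub_nonpos.2 hlt⟩)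
    have hs0 : 0 < s := by
      refine hs.1.lt_of_ne ?_
      rintro rfl
      have h := hδ₀' (i, v) ⟨mem_univ _, hv⟩
      simp only [hη, mul_zero, Real.exp_zero, mul_one] at hle
      linarith
    have hIco : Ico 0 s ⊆ Icc 0 T := fun r hr => ⟨hr.1, hr.2.le.trans hs.2⟩
    have hge : ∀ (j : Fin N) (w : Fin d → ℝ), w ⬝ᵥ w = 1 → η s ≤ w ⬝ᵥ x s j *ᵥ w := by
      intro j w hw
      have hmem : Icc 0 T ∈ 𝓝[<] s := mem_of_superset (Ico_mem_nhdsLT hs0) hIco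
      refine le_of_tendsto_of_tendsto hηcont.continuousWithinAt
        ((hform j w s hs).mono_of_mem_nhdsWithin hmem) ?_
      filter_upwards [Ico_mem_nhdsLT hs0] with r hr using (hfirst r hr j w hw).le
    have hall : ∀ (j : Fin N) (w : Fin d → ℝ), η s * (w ⬝ᵥ w) ≤ w ⬝ᵥ x s j *ᵥ w := fun j w =>
      mul_dotProduct_self_le_of_unit (hge j) w
    have heq : v ⬝ᵥ x s i *ᵥ v = η s := le_antisymm hle (hge i v hv)
    have hpsd : (x s i - η s • (1 : Matrix (Fin d) (Fin d) ℝ)).PosSemidef := by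
      refine .of_dotProduct_mulVec_nonneg ?_ fun w => ?_
      · have := (hsymm s hs i).eq
        simp [IsHermitian, conjTranspose_eq_transpose_of_trivial, this]
      · have := hall i w
        simp only [star_trivial, sub_mulVec, smul_mulVec, one_mulVec, dotProduct_sub,
          dotProduct_smul, smul_eq_mul]
        linarith
    have hker : x s i *ᵥ v = η s • v := by
      have h := (hpsd.dotProduct_mulVec_zero_iff v).1 (by
        simp [sub_mulVec, smul_mulVec, heq, hv])
      simpa [sub_mulVec, smul_mulVec, sub_eq_zero] using h
    have hη1 : η s ≤ 1 := by
      have : Real.exp (-(c + 1) * s) ≤ 1 := Real.exp_le_one_iff.2 (by nlinarith)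
      exact mul_le_one₀ hδ1 (Real.exp_pos _).le this
    have hlow := neg_mul_le_dotProduct_riccatiRHS (C := C) hQ hR hm₁ hm₂ (hηpos s).le hη1 hall
      (hsymm s hs i) hv hker (hc i v hv)
    have hderiv : HasDerivWithinAt (fun r => quadraticValue v (x r i) - η r)
        (quadraticValue v (θ s • riccatiRHS A C B Q R m (x s) i) - -(c + 1) * η s) (Icc 0 s) s :=
      ((hasDerivWithinAt_pi.1 ((hx s hs).mono (Icc_subset_Icc_right hs.2)) i).linearMap_comp
        (quadraticValue v)).sub (hηderiv s).hasDerivWithinAt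
    have hnonpos := deriv_nonpos_of_le_left hs0 hderiv fun r hr =>
      (sub_nonpos.2 hle).trans (sub_nonneg.2 (hfirst r hr i v hv).le)
    rw [map_smul, smul_eq_mul] at hnonpos
    have h₁ := mul_le_mul_of_nonneg_left hlow (hθ s).1
    have h₂ := mul_le_mul_of_nonneg_right (hθ s).2 (mul_nonneg hc0 (hηpos s).le)
    change θ s * (v ⬝ᵥ riccatiRHS A C B Q R m (x s) i *ᵥ v) - _ ≤ 0 at hnonpos
    linarith [hηpos s]
  refine .of_dotProduct_mulVec_nonneg (isHermitian_iff_isSymm.2 (hsymm t ht i)) fun w => ?_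
  have h := mul_dotProduct_self_le_of_unit (fun v hv => (claim t ht i v hv).le) w
  have hw : 0 ≤ w ⬝ᵥ w := by simpa using dotProduct_star_self_nonneg w
  exact (mul_nonneg (hηpos t).le hw).trans h

/-- The sum of the traces, as a linear map. -/
def sumTrace : (Fin N → Matrix (Fin d) (Fin d) ℝ) →ₗ[ℝ] ℝ :=
  ∑ i, Matrix.traceLinearMap (Fin d) ℝ ℝ ∘ₗ LinearMap.proj i

theorem sumTrace_apply (x : Fin N → Matrix (Fin d) (Fin d) ℝ) :
    sumTrace x = ∑ i, (x i).trace := by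
  simp [sumTrace]

/-- On positive semidefinite tuples, the trace of the Riccati vector field grows at most
affinely. -/
theorem exists_sumTrace_riccatiRHS_le (hQ : ∀ i, (Q i).PosSemidef) (hR : ∀ i, (R i).PosDef) :
    ∃ k q : ℝ, 0 ≤ k ∧ 0 ≤ q ∧ ∀ x : Fin N → Matrix (Fin d) (Fin d) ℝ,
      (∀ i, (x i).PosSemidef) →
        sumTrace (riccatiRHS A C B Q R m x) ≤ k * sumTrace x + q := by
  let f : (Fin N → Matrix (Fin d) (Fin d) ℝ) →ₗ[ℝ] ℝ := sumTrace ∘ₗ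
    { toFun := fun x i => (C i)ᵀ * x i * C i + (A i)ᵀ * x i + x i * A i + ∑ j, m i j • x j
      map_add' := fun x y => by
        ext1 i
        simp only [Pi.add_apply, Matrix.mul_add, Matrix.add_mul, smul_add, Finset.sum_add_distrib]
        abel
      map_smul' := fun r x => by
        ext1 i
        simp only [Pi.smul_apply, Matrix.mul_smul, Matrix.smul_mul, smul_add, Finset.smul_sum,
          RingHom.id_apply, smul_comm r] }
  obtain ⟨k, hk, hfk⟩ := f.exists_apply_le_mul_norm
  refine ⟨k, sumTrace Q, hk, ?_, fun x hx => ?_⟩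
  · rw [sumTrace_apply]
    exact Finset.sum_nonneg fun i _ => (hQ i).trace_nonneg
  have hf : f x ≤ k * sumTrace x := by
    rw [sumTrace_apply]
    exact (hfk x).trans (mul_le_mul_of_nonneg_left (norm_le_sum_trace hx) hk)
  have hquad : 0 ≤ sumTrace fun i => x i * B i * (R i)⁻¹ * (B i)ᵀ * x i := by
    rw [sumTrace_apply]
    refine Finset.sum_nonneg fun i _ => PosSemidef.trace_nonneg ?_
    have h := (hR i).inv.posSemidef.mul_mul_conjTranspose_same (x i * B i)
    simpa [(isHermitian_iff_isSymm.1 (hx i).1).eq, Matrix.mul_assoc] using h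
  have hsplit : riccatiRHS A C B Q R m x
      = (fun i => (C i)ᵀ * x i * C i + (A i)ᵀ * x i + x i * A i + ∑ j, m i j • x j)
        - (fun i => x i * B i * (R i)⁻¹ * (B i)ᵀ * x i) + Q := by
    ext1 i
    simp only [riccatiRHS, Pi.add_apply, Pi.sub_apply]
    abel
  rw [hsplit, map_add, map_sub]
  change f x - _ + _ ≤ _
  linarith

/-- The Riccati equation, run forward in time from positive definite initial data, is solvable
on every bounded interval. -/
theorem exists_riccati_forward (hQ : ∀ i, (Q i).PosSemidef) (hR : ∀ i, (R i).PosDef)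
    (hm₁ : ∀ i j, i ≠ j → 0 ≤ m i j) (hm₂ : ∀ i, ∑ j, m i j = 0)
    {P : Fin N → Matrix (Fin d) (Fin d) ℝ} (hP : ∀ i, (P i).PosDef) {T : ℝ} (hT : 0 ≤ T) :
    ∃ x : ℝ → Fin N → Matrix (Fin d) (Fin d) ℝ, x 0 = P ∧
      ∀ t ∈ Icc 0 T, HasDerivWithinAt x (riccatiRHS A C B Q R m (x t)) (Icc 0 T) t := by
  obtain ⟨k, q, hk, hq, hkq⟩ :=
    exists_sumTrace_riccatiRHS_le (A := A) (C := C) (B := B) (m := m) hQ hR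
  have hPos : 0 ≤ sumTrace P := by
    rw [sumTrace_apply]
    exact Finset.sum_nonneg fun i _ => (hP i).posSemidef.trace_nonneg
  refine exists_solution_of_forall_norm_le contDiff_riccatiRHS hT
    (M := gronwallBound (sumTrace P) k q T) fun θ x hθ hx0 hx t ht => ?_
  have hpsd : ∀ t ∈ Icc 0 T, ∀ i, (x t i).PosSemidef := fun t ht i =>
    posSemidef_of_hasDerivWithinAt hQ hR hm₁ hm₂ hθ hx (fun j => hx0 ▸ hP j) ht i
  have hderiv := fun t ht => (hx t ht).linearMap_comp sumTrace
  have hgron := le_gronwallBound_of_liminf_deriv_right_le (δ := sumTrace P) (K := k) (ε := q)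
    (fun t ht => (hderiv t ht).continuousWithinAt)
    (fun t ht r hr => by
      simpa [slope_def_field, div_eq_inv_mul] using
        ((hderiv t (Ico_subset_Icc_self ht)).mono_of_mem_nhdsWithin
          (Icc_mem_nhdsGE_of_mem ht)).liminf_right_slope_le hr)
    (by rw [hx0])
    (fun t ht => by
      have hp := hpsd t (Ico_subset_Icc_self ht)
      have h0 : 0 ≤ sumTrace (x t) := by
        rw [sumTrace_apply]
        exact Finset.sum_nonneg fun i _ => (hp i).trace_nonneg
      rw [map_smul, smul_eq_mul]
      exact (mul_le_mul_of_nonneg_left (hkq _ hp) (hθ t).1).trans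
        (mul_le_of_le_one_left (by positivity) (hθ t).2)) t ht
  rw [sub_zero] at hgron
  exact ((norm_le_sum_trace (hpsd t ht)).trans_eq (sumTrace_apply _).symm).trans
    (hgron.trans (gronwallBound_mono hPos hq hk ht.2))

end Riccati

/-- Existence and uniqueness for the coupled Riccati system. -/
theorem riccati_existsUnique
    (d l N : ℕ) (hd : 0 < d) (hl : 0 < l) (hN : 0 < N)
    (T : ℝ) (hT : 0 < T)
    (A C Q P : Fin N → Matrix (Fin d) (Fin d) ℝ)
    (B : Fin N → Matrix (Fin d) (Fin l) ℝ)
    (R : Fin N → Matrix (Fin l) (Fin l) ℝ)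
    (m : Fin N → Fin N → ℝ)
    (hQ : ∀ i, (Q i).PosSemidef)
    (hR : ∀ i, (R i).PosDef)
    (hP : ∀ i, (P i).PosDef)
    (hm₁ : ∀ i j, i ≠ j → 0 ≤ m i j)
    (hm₂ : ∀ i, ∑ j, m i j = 0) :
    (∃ K : ℝ → Fin N → Matrix (Fin d) (Fin d) ℝ,
        IsRiccatiSolution T A C B Q R m P K) ∧
    (∀ K K' : ℝ → Fin N → Matrix (Fin d) (Fin d) ℝ,
        IsRiccatiSolution T A C B Q R m P K →
        IsRiccatiSolution T A C B Q R m P K' →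
        ∀ t ∈ Icc (0:ℝ) T, ∀ i, K t i = K' t i) := by
  have hmem : ∀ t ∈ Icc (0 : ℝ) T, T - t ∈ Icc (0 : ℝ) T := fun t ht =>
    ⟨sub_nonneg.2 ht.2, sub_le_self T ht.1⟩
  constructor
  · obtain ⟨x, hx0, hx⟩ :=
      exists_riccati_forward (A := A) (C := C) (B := B) hQ hR hm₁ hm₂ hP hT.le
    refine ⟨fun t => x (T - t), fun t ht i => ?_, fun t ht i => ?_, fun i => ?_⟩
    · exact isSymm_of_hasDerivWithinAt (θ := fun _ => 1) hQ hR (fun _ => by simp)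
        (fun t ht => by simpa using hx t ht)
        (fun j => hx0 ▸ isHermitian_iff_isSymm.1 (hP j).1) (hmem t ht) i
    · exact hasDerivWithinAt_pi.1 (hasDerivWithinAt_comp_const_sub (hx _ (hmem t ht))) i
    · simp [hx0]
  · intro K K' hK hK' t ht i
    have hforward : ∀ L, IsRiccatiSolution T A C B Q R m P L → ∀ t ∈ Icc 0 T,
        HasDerivWithinAt (fun s => L (T - s))
          ((1 : ℝ) • riccatiRHS A C B Q R m (L (T - t))) (Icc 0 T) t := by
      intro L hL t ht
      have h : HasDerivWithinAt L (-riccatiRHS A C B Q R m (L (T - t))) (Icc 0 T) (T - t) :=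
        hasDerivWithinAt_pi.2 fun j => hL.2.1 _ (hmem t ht) j
      have h' := hasDerivWithinAt_comp_const_sub h
      rw [neg_neg] at h'
      rw [one_smul]
      exact h'
    have h := eqOn_of_hasDerivWithinAt_smul (θ := fun _ => 1) contDiff_riccatiRHS
      (fun _ => by simp) (hforward K hK) (hforward K' hK')
      (by funext j; simp [hK.2.2, hK'.2.2]) (hmem t ht)
    simpa using congrFun h i
end
end

section
/- A priori bounds on the Riccati solutions, uniform over the approximating family: let (A_n, B_n, C_n, Q_n, R_n, m^n), n ∈ ℕ, be coefficient data all having the same terminal matrices P(i), and assume the uniform bounds sup_n max_{i∈S} (‖A_n(i)‖ + ‖C_n(i)‖ + ‖Q_n(i)‖) < ∞ and sup_n max_{i,j∈S} |m^n_{ij}| < ∞. Let K_n solve the coupled Riccati system associated with the n-th datum. Then there exist constants C₀ > 0 and k₀ > 0, independent of n, t, i and x, such that for every n ∈ ℕ, t ∈ [0,T], x ∈ ℝ^d and i ∈ S one has 0 ≤ xᵀK_n(t,i)x ≤ C₀ e^{k₀ T} |x|² (T+1), and consequently ‖K_n(t,i)‖ ≤ C₀ e^{k₀ T} (T+1). 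-/
open Matrix Set Filter Topology

attribute [local instance] Matrix.normedAddCommGroup Matrix.normedSpace

noncomputable section

theorem hasDerivWithinAt_dotProduct_mulVec {d : ℕ} {F : ℝ → Matrix (Fin d) (Fin d) ℝ}
    {F' : Matrix (Fin d) (Fin d) ℝ} {s : Set ℝ} {t : ℝ} (h : HasDerivWithinAt F F' s t)
    (x : Fin d → ℝ) :
    HasDerivWithinAt (fun r => x ⬝ᵥ F r *ᵥ x) (x ⬝ᵥ F' *ᵥ x) s t := by
  let L : Matrix (Fin d) (Fin d) ℝ →ₗ[ℝ] ℝ :=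
    { toFun := fun M => x ⬝ᵥ M *ᵥ x
      map_add' := fun M M' => by simp [add_mulVec]
      map_smul' := fun c M => by simp [smul_mulVec] }
  exact L.toContinuousLinearMap.hasFDerivAt.comp_hasDerivWithinAt t h

theorem isCompact_dotProduct_self_eq_one (d : ℕ) :
    IsCompact {x : Fin d → ℝ | x ⬝ᵥ x = 1} := by
  refine Metric.isCompact_of_isClosed_isBounded
    (isClosed_eq (continuous_id.dotProduct continuous_id) continuous_const) ?_
  refine (Metric.isBounded_closedBall (x := (0 : Fin d → ℝ)) (r := 1)).subset fun x hx => ?_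
  rw [mem_closedBall_zero_iff, pi_norm_le_iff_of_nonneg zero_le_one]
  intro i
  have h : x i * x i ≤ x ⬝ᵥ x :=
    Finset.single_le_sum (f := fun j => x j * x j) (fun j _ => mul_self_nonneg (x j))
      (Finset.mem_univ i)
  rw [mem_ofPred_eq] at hx
  rw [Real.norm_eq_abs, abs_le]
  constructor <;> nlinarith

/-- A quadratic inequality holds for all vectors once it holds on the unit sphere. -/
theorem dotProduct_mulVec_le_of_unit {d : ℕ} {M : Matrix (Fin d) (Fin d) ℝ} {c : ℝ}
    (h : ∀ x : Fin d → ℝ, x ⬝ᵥ x = 1 → x ⬝ᵥ M *ᵥ x ≤ c) (x : Fin d → ℝ) :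
    x ⬝ᵥ M *ᵥ x ≤ c * (x ⬝ᵥ x) := by
  rcases eq_or_ne x 0 with rfl | hx
  · simp
  have hpos : 0 < x ⬝ᵥ x := by
    refine lt_of_le_of_ne (Finset.sum_nonneg fun j _ => mul_self_nonneg (x j)) fun h0 => ?_
    exact hx (dotProduct_self_eq_zero.1 h0.symm)
  have hsq := Real.mul_self_sqrt hpos.le
  have hs : 0 < √(x ⬝ᵥ x) := Real.sqrt_pos.2 hpos
  have hi : (√(x ⬝ᵥ x))⁻¹ * (√(x ⬝ᵥ x))⁻¹ = (x ⬝ᵥ x)⁻¹ := by rw [← mul_inv, hsq]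
  have := h ((√(x ⬝ᵥ x))⁻¹ • x) (by
    simp only [smul_dotProduct, dotProduct_smul, smul_eq_mul]
    rw [← mul_assoc, hi, inv_mul_cancel₀ hpos.ne'])
  simp only [smul_dotProduct, dotProduct_smul, smul_eq_mul, mulVec_smul] at this
  rw [← mul_assoc, hi, inv_mul_le_iff₀ hpos] at this
  linarith

theorem nonneg_dotProduct_mulVec_of_unit {d : ℕ} {M : Matrix (Fin d) (Fin d) ℝ}
    (h : ∀ x : Fin d → ℝ, x ⬝ᵥ x = 1 → 0 ≤ x ⬝ᵥ M *ᵥ x) (x : Fin d → ℝ) :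
    0 ≤ x ⬝ᵥ M *ᵥ x := by
  have := dotProduct_mulVec_le_of_unit (M := -M) (c := 0)
    (fun y hy => by simpa [neg_mulVec] using h y hy) x
  simpa [neg_mulVec] using this

/-- Backward barrier principle: a differentiable family of symmetric matrices that is positive
definite at the final time stays positive definite, provided that at every semidefinite instant
its derivative is negative along kernel vectors. -/
theorem pos_of_backward_barrier {d N : ℕ} {T : ℝ}
    {F F' : ℝ → Fin N → Matrix (Fin d) (Fin d) ℝ}
    (hsymm : ∀ t ∈ Icc (0:ℝ) T, ∀ i, (F t i).IsSymm)
    (hderiv : ∀ t ∈ Icc (0:ℝ) T, ∀ i,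
      HasDerivWithinAt (fun s => F s i) (F' t i) (Icc (0:ℝ) T) t)
    (hfinal : ∀ i, ∀ x : Fin d → ℝ, x ⬝ᵥ x = 1 → 0 < x ⬝ᵥ F T i *ᵥ x)
    (hneg : ∀ t ∈ Icc (0:ℝ) T, ∀ i, ∀ x : Fin d → ℝ, x ⬝ᵥ x = 1 →
      (∀ j, ∀ y : Fin d → ℝ, 0 ≤ y ⬝ᵥ F t j *ᵥ y) → F t i *ᵥ x = 0 →
      x ⬝ᵥ F' t i *ᵥ x < 0) :
    ∀ t ∈ Icc (0:ℝ) T, ∀ i, ∀ x : Fin d → ℝ, x ⬝ᵥ x = 1 → 0 < x ⬝ᵥ F t i *ᵥ x := by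
  let D : Set (ℝ × (Fin d → ℝ)) := Icc (0:ℝ) T ×ˢ {x | x ⬝ᵥ x = 1}
  have hD : IsCompact D := isCompact_Icc.prod (isCompact_dotProduct_self_eq_one d)
  let Z : Fin N → Set (ℝ × (Fin d → ℝ)) := fun i =>
    D ∩ (fun p => p.2 ⬝ᵥ F p.1 i *ᵥ p.2) ⁻¹' Iic 0
  have hZ : ∀ i, IsCompact (Z i) := fun i => by
    have hF : ContinuousOn (fun p : ℝ × (Fin d → ℝ) => F p.1 i) D :=
      ContinuousOn.comp (g := fun s => F s i) (t := Icc (0:ℝ) T)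
        (fun t ht => (hderiv t ht i).continuousWithinAt)
        continuousOn_fst (fun p hp => hp.1)
    have hΦ : Continuous (fun q : Matrix (Fin d) (Fin d) ℝ × (Fin d → ℝ) =>
        q.2 ⬝ᵥ q.1 *ᵥ q.2) :=
      continuous_snd.dotProduct (continuous_fst.matrix_mulVec continuous_snd)
    have hc : ContinuousOn (fun p : ℝ × (Fin d → ℝ) => p.2 ⬝ᵥ F p.1 i *ᵥ p.2) D :=
      hΦ.comp_continuousOn (hF.prodMk continuousOn_snd)
    exact hD.of_isClosed_subset (hc.preimage_isClosed_of_isClosed hD.isClosed isClosed_Iic)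
      inter_subset_left
  have hbad : IsCompact (Prod.fst '' ⋃ i, Z i) := (isCompact_iUnion hZ).image continuous_fst
  rcases (Prod.fst '' ⋃ i, Z i).eq_empty_or_nonempty with hempty | hne
  · intro t ht i x hx
    by_contra! hle
    have : t ∈ Prod.fst '' ⋃ i, Z i := ⟨(t, x), mem_iUnion.2 ⟨i, ⟨ht, hx⟩, hle⟩, rfl⟩
    simp [hempty] at this
  exfalso
  obtain ⟨t, ⟨⟨_, x⟩, hmem, rfl⟩, hmax⟩ := hbad.exists_isGreatest hne
  obtain ⟨i, ⟨ht, hx⟩, hle⟩ := mem_iUnion.1 hmem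
  rename_i t
  simp only [mem_preimage, mem_Iic, mem_ofPred_eq] at ht hx hle hmax
  have htT : t < T := lt_of_le_of_ne ht.2 fun h => by
    subst h; exact absurd (hfinal i x hx) (not_lt.2 hle)
  have hafter : ∀ s ∈ Ioc t T, ∀ j, ∀ y : Fin d → ℝ, y ⬝ᵥ y = 1 → 0 < y ⬝ᵥ F s j *ᵥ y := by
    intro s hs j y hy
    by_contra! hle'
    have := hmax ⟨(s, y), mem_iUnion.2 ⟨j, ⟨⟨ht.1.trans hs.1.le, hs.2⟩, hy⟩, hle'⟩, rfl⟩
    exact absurd hs.1 (not_lt.2 this)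
  have hsub : Ioc t T ⊆ Icc 0 T := fun s hs => ⟨ht.1.trans hs.1.le, hs.2⟩
  have hne' : (𝓝[Ioc t T] t).NeBot := by
    rw [nhdsWithin_Ioc_eq_nhdsGT htT]; infer_instance
  have hnow : ∀ j, ∀ y : Fin d → ℝ, 0 ≤ y ⬝ᵥ F t j *ᵥ y := fun j =>
    nonneg_dotProduct_mulVec_of_unit fun y hy => by
      have hg := (hasDerivWithinAt_dotProduct_mulVec (hderiv t ht j) y).continuousWithinAt.mono hsub
      exact ge_of_tendsto hg
        (eventually_nhdsWithin_of_forall fun s hs => (hafter s hs j y hy).le)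
  have hpsd : (F t i).PosSemidef := .of_dotProduct_mulVec_nonneg
    ((conjTranspose_eq_transpose_of_trivial _).trans (hsymm t ht i).eq)
    (by simpa using hnow i)
  have hzero : x ⬝ᵥ F t i *ᵥ x = 0 := le_antisymm hle (hnow i x)
  have hker : F t i *ᵥ x = 0 := (hpsd.dotProduct_mulVec_zero_iff x).1 (by simpa using hzero)
  have hslope := ((hasDerivWithinAt_dotProduct_mulVec (hderiv t ht i) x).mono hsub).limsup_slope_le'
    (by simp) (hneg t ht i x hx hnow hker)
  obtain ⟨s, hs, hsT⟩ := (hslope.and self_mem_nhdsWithin).exists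
  rw [slope_def_field, hzero, sub_zero] at hs
  exact absurd (div_pos (hafter s hsT i x hx) (sub_pos.2 hsT.1)) (not_lt.2 hs.le)

theorem mulVec_dotProduct_self_le {d : ℕ} {A : Matrix (Fin d) (Fin d) ℝ} {M : ℝ} (hA : ‖A‖ ≤ M)
    {x : Fin d → ℝ} (hx : x ⬝ᵥ x = 1) : A *ᵥ x ⬝ᵥ A *ᵥ x ≤ (d * M) ^ 2 := by
  have hrow : ∀ i, (A *ᵥ x) i * (A *ᵥ x) i ≤ d * M ^ 2 := fun i => by
    have hcs := Finset.sum_mul_sq_le_sq_mul_sq Finset.univ (A i) x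
    have hx' : ∑ j, x j ^ 2 = 1 := by simpa [dotProduct, sq] using hx
    have hA' : ∑ j, A i j ^ 2 ≤ d * M ^ 2 := by
      have : ∀ j ∈ Finset.univ, A i j ^ 2 ≤ M ^ 2 := fun j _ =>
        sq_le_sq' (by linarith [neg_abs_le (A i j), (norm_entry_le_entrywise_sup_norm A (i := i)
          (j := j)).trans hA, Real.norm_eq_abs (A i j)])
          ((le_abs_self _).trans ((norm_entry_le_entrywise_sup_norm A).trans hA))
      simpa using Finset.sum_le_sum this
    rw [hx', mul_one] at hcs
    rw [← sq]
    exact hcs.trans hA'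
  calc A *ᵥ x ⬝ᵥ A *ᵥ x ≤ ∑ _i : Fin d, d * M ^ 2 := Finset.sum_le_sum fun i _ => hrow i
    _ = (d * M) ^ 2 := by simp; ring

theorem abs_two_mul_dotProduct_mulVec_le {d : ℕ} {A : Matrix (Fin d) (Fin d) ℝ} {M : ℝ}
    (hA : ‖A‖ ≤ M) {x : Fin d → ℝ} (hx : x ⬝ᵥ x = 1) :
    |2 * (x ⬝ᵥ A *ᵥ x)| ≤ 1 + (d * M) ^ 2 := by
  have h := mulVec_dotProduct_self_le hA hx
  have hp : 0 ≤ (x + A *ᵥ x) ⬝ᵥ (x + A *ᵥ x) :=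
    Finset.sum_nonneg fun j _ => mul_self_nonneg _
  have hm : 0 ≤ (x - A *ᵥ x) ⬝ᵥ (x - A *ᵥ x) :=
    Finset.sum_nonneg fun j _ => mul_self_nonneg _
  simp only [add_dotProduct, dotProduct_add, sub_dotProduct, dotProduct_sub, hx,
    dotProduct_comm (A *ᵥ x) x] at hp hm
  rw [abs_le]
  constructor <;> linarith

theorem generator_sum_nonneg {N : ℕ} {m a : Fin N → ℝ} {i : Fin N}
    (hm : ∀ j, i ≠ j → 0 ≤ m j) (hsum : ∑ j, m j = 0) (ha : ∀ j, a i ≤ a j) :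
    0 ≤ ∑ j, m j * a j := by
  have h : ∑ j, m j * a j = ∑ j, m j * (a j - a i) := by
    simp only [mul_sub, Finset.sum_sub_distrib, ← Finset.sum_mul, hsum, zero_mul, sub_zero]
  rw [h]
  refine Finset.sum_nonneg fun j _ => ?_
  rcases eq_or_ne i j with rfl | hij
  · simp
  · exact mul_nonneg (hm j hij) (sub_nonneg.2 (ha j))

theorem dotProduct_riccatiRHS_mulVec_of_eigenvector {d l N : ℕ}
    {A C Q : Fin N → Matrix (Fin d) (Fin d) ℝ} {B : Fin N → Matrix (Fin d) (Fin l) ℝ}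
    {R : Fin N → Matrix (Fin l) (Fin l) ℝ} {m : Fin N → Fin N → ℝ}
    {K : Fin N → Matrix (Fin d) (Fin d) ℝ} {i : Fin N} {x : Fin d → ℝ} {c : ℝ}
    (hsymm : (K i).IsSymm) (hx : K i *ᵥ x = c • x) :
    x ⬝ᵥ riccatiRHS A C B Q R m K i *ᵥ x =
      C i *ᵥ x ⬝ᵥ K i *ᵥ (C i *ᵥ x) + c * (2 * (x ⬝ᵥ A i *ᵥ x))
        - c ^ 2 * (x ⬝ᵥ (B i * (R i)⁻¹ * (B i)ᵀ) *ᵥ x) + x ⬝ᵥ Q i *ᵥ x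
        + ∑ j, m i j * (x ⬝ᵥ K j *ᵥ x) := by
  have hleft : ∀ y, x ⬝ᵥ K i *ᵥ y = c * (x ⬝ᵥ y) := fun y => by
    rw [dotProduct_mulVec, ← mulVec_transpose, hsymm.eq, hx, smul_dotProduct, smul_eq_mul]
  have hC : x ⬝ᵥ ((C i)ᵀ * K i * C i) *ᵥ x = C i *ᵥ x ⬝ᵥ K i *ᵥ (C i *ᵥ x) := by
    rw [← mulVec_mulVec, ← mulVec_mulVec, dotProduct_mulVec, vecMul_transpose]
  have hA₁ : x ⬝ᵥ ((A i)ᵀ * K i) *ᵥ x = c * (x ⬝ᵥ A i *ᵥ x) := by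
    rw [← mulVec_mulVec, hx, dotProduct_mulVec, vecMul_transpose, dotProduct_smul, smul_eq_mul,
      dotProduct_comm]
  have hA₂ : x ⬝ᵥ (K i * A i) *ᵥ x = c * (x ⬝ᵥ A i *ᵥ x) := by
    rw [← mulVec_mulVec, hleft]
  have hB : x ⬝ᵥ (K i * B i * (R i)⁻¹ * (B i)ᵀ * K i) *ᵥ x =
      c ^ 2 * (x ⬝ᵥ (B i * (R i)⁻¹ * (B i)ᵀ) *ᵥ x) := by
    have : K i * B i * (R i)⁻¹ * (B i)ᵀ * K i = K i * (B i * (R i)⁻¹ * (B i)ᵀ) * K i := by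
      simp only [Matrix.mul_assoc]
    rw [this, ← mulVec_mulVec, hx, ← mulVec_mulVec, hleft, mulVec_smul, dotProduct_smul,
      smul_eq_mul]
    ring
  have hS : x ⬝ᵥ (∑ j, m i j • K j) *ᵥ x = ∑ j, m i j * (x ⬝ᵥ K j *ᵥ x) := by
    rw [sum_mulVec, dotProduct_sum]
    simp [smul_mulVec]
  rw [riccatiRHS, add_mulVec, add_mulVec, sub_mulVec, add_mulVec, add_mulVec, dotProduct_add,
    dotProduct_add, dotProduct_sub, dotProduct_add, dotProduct_add, hC, hA₁, hA₂, hB, hS]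
  ring

theorem hasDerivAt_mul_exp_backward (c k T t : ℝ) :
    HasDerivAt (fun s => c * Real.exp (k * (T - s))) (-(k * (c * Real.exp (k * (T - t))))) t := by
  have h := (((hasDerivAt_id t).const_sub T).const_mul k).exp.const_mul c
  exact h.congr_deriv (by rw [id]; ring)

theorem abs_entry_le_of_quadratic_bounds {d : ℕ} {M : Matrix (Fin d) (Fin d) ℝ} {b : ℝ}
    (hsymm : M.IsSymm) (h₀ : ∀ x : Fin d → ℝ, 0 ≤ x ⬝ᵥ M *ᵥ x)
    (h₁ : ∀ x : Fin d → ℝ, x ⬝ᵥ M *ᵥ x ≤ b * (x ⬝ᵥ x)) (i j : Fin d) : |M i j| ≤ b := by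
  have hji : M j i = M i j := hsymm.apply i j
  have hii := h₁ (Pi.single i 1)
  have hjj := h₁ (Pi.single j 1)
  have hp := h₀ (Pi.single i 1 + Pi.single j 1)
  have hm := h₀ (Pi.single i 1 - Pi.single j 1)
  simp [mulVec_add, mulVec_sub] at hii hjj hp hm
  rw [abs_le]
  constructor <;> linarith

section RiccatiBounds

variable {d l N : ℕ} {T M : ℝ} {A C Q : Fin N → Matrix (Fin d) (Fin d) ℝ}
  {B : Fin N → Matrix (Fin d) (Fin l) ℝ} {R : Fin N → Matrix (Fin l) (Fin l) ℝ}
  {m : Fin N → Fin N → ℝ} {P : Fin N → Matrix (Fin d) (Fin d) ℝ}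
  {K : ℝ → Fin N → Matrix (Fin d) (Fin d) ℝ}

theorem IsRiccatiSolution.nonneg (hK : IsRiccatiSolution T A C B Q R m P K)
    (hQ : ∀ i, (Q i).PosSemidef) (hP : ∀ i, (P i).PosDef)
    (hm₁ : ∀ i j, i ≠ j → 0 ≤ m i j) (hm₂ : ∀ i, ∑ j, m i j = 0)
    (hA : ∀ i, ‖A i‖ ≤ M) (hC : ∀ i, ‖C i‖ ≤ M)
    {t : ℝ} (ht : t ∈ Icc (0:ℝ) T) (i : Fin N) (x : Fin d → ℝ) :
    0 ≤ x ⬝ᵥ K t i *ᵥ x := by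
  obtain ⟨hsymm, hderiv, hfinal⟩ := hK
  let G : Fin N → Matrix (Fin d) (Fin d) ℝ := fun i => B i * (R i)⁻¹ * (B i)ᵀ
  let β : ℝ := 1 + (d * ∑ i, ‖G i‖) ^ 2
  have hβ : 0 < β := by positivity
  have hG : ∀ i, ∀ x : Fin d → ℝ, x ⬝ᵥ x = 1 → x ⬝ᵥ G i *ᵥ x ≤ β := fun i x hx => by
    have h := abs_two_mul_dotProduct_mulVec_le
      (Finset.single_le_sum (f := fun i => ‖G i‖) (fun i _ => norm_nonneg _)
        (Finset.mem_univ i)) hx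
    have := (abs_le.1 h).2
    change x ⬝ᵥ G i *ᵥ x ≤ 1 + (d * ∑ i, ‖G i‖) ^ 2
    linarith [sq_nonneg (d * ∑ i, ‖G i‖)]
  let k : ℝ := 2 * (d * M) ^ 2 + 3
  have hk : 0 ≤ k := by positivity
  have hbarrier : ∀ ε > 0, ε * Real.exp (k * T) * β ≤ 1 → ∀ t ∈ Icc (0:ℝ) T, ∀ i,
      ∀ x : Fin d → ℝ, x ⬝ᵥ x = 1 →
      0 < x ⬝ᵥ (K t i + (ε * Real.exp (k * (T - t))) • (1 : Matrix (Fin d) (Fin d) ℝ)) *ᵥ x := by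
    intro ε hε hsmall
    refine pos_of_backward_barrier
      (F' := fun t i => -(riccatiRHS A C B Q R m (K t) i) +
        (-(k * (ε * Real.exp (k * (T - t))))) • (1 : Matrix (Fin d) (Fin d) ℝ)) ?_ ?_ ?_ ?_
    · exact fun t ht i => (hsymm t ht i).add (isSymm_one.smul _)
    · exact fun t ht i => (hderiv t ht i).add
        ((hasDerivAt_mul_exp_backward ε k T t).hasDerivWithinAt.smul_const _)
    · intro i x hx
      have hx0 : x ≠ 0 := by rintro rfl; simp at hx
      have := (hP i).dotProduct_mulVec_pos hx0
      simp only [star_trivial] at this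
      simp only [hfinal, add_mulVec, smul_mulVec, one_mulVec, dotProduct_add, dotProduct_smul, hx]
      simp
      positivity
    · intro t ht i x hx hpos hker
      set δ := ε * Real.exp (k * (T - t)) with hδ
      have hδ0 : 0 < δ := by positivity
      have hδβ : δ * β ≤ 1 := by
        refine le_trans ?_ hsmall
        have : k * (T - t) ≤ k * T := mul_le_mul_of_nonneg_left (by linarith [ht.1]) hk
        rw [hδ]
        gcongr
      simp only [add_mulVec, smul_mulVec, one_mulVec, dotProduct_add, dotProduct_smul,
        smul_eq_mul] at hpos hker
      have heig : K t i *ᵥ x = (-δ) • x := by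
        rw [neg_smul]; exact eq_neg_of_add_eq_zero_left hker
      have hKx : x ⬝ᵥ K t i *ᵥ x = -δ := by simp [heig, hx]
      have hsum : 0 ≤ ∑ j, m i j * (x ⬝ᵥ K t j *ᵥ x) :=
        generator_sum_nonneg (hm₁ i) (hm₂ i) fun j => by
          have := hpos j x
          rw [hx] at this
          linarith
      have hQx := (hQ i).dotProduct_mulVec_nonneg x
      rw [star_trivial] at hQx
      have hCx := hpos i (C i *ᵥ x)
      have hCn := mul_le_mul_of_nonneg_left (mulVec_dotProduct_self_le (hC i) hx) hδ0.le
      have hAx := mul_le_mul_of_nonneg_left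
        (abs_le.1 (abs_two_mul_dotProduct_mulVec_le (hA i) hx)).2 hδ0.le
      have hGx := mul_le_mul_of_nonneg_left (hG i x hx) (sq_nonneg δ)
      have hδ2 : δ ^ 2 * β ≤ δ := by
        calc δ ^ 2 * β = δ * (δ * β) := by ring
          _ ≤ δ * 1 := mul_le_mul_of_nonneg_left hδβ hδ0.le
          _ = δ := mul_one δ
      have hkδ : k * δ = δ * (2 * (d * M) ^ 2 + 3) := mul_comm _ _
      rw [add_mulVec, dotProduct_add, neg_mulVec, dotProduct_neg, smul_mulVec, one_mulVec,
        dotProduct_smul, hx, dotProduct_riccatiRHS_mulVec_of_eigenvector (hsymm t ht i) heig,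
        smul_eq_mul, hkδ]
      simp only [G] at hGx
      linarith
  refine nonneg_dotProduct_mulVec_of_unit (fun x hx => ?_) x
  by_contra! hlt
  set a := -(x ⬝ᵥ K t i *ᵥ x) with ha
  have ha0 : 0 < a := by linarith
  have hE : 0 < Real.exp (k * T) := Real.exp_pos _
  have hε : 0 < min (1 / β) a / Real.exp (k * T) :=
    div_pos (lt_min (by positivity) ha0) hE
  have hcancel : min (1 / β) a / Real.exp (k * T) * Real.exp (k * T) = min (1 / β) a :=
    div_mul_cancel₀ _ hE.ne'
  have h := hbarrier _ hε (by
    rw [hcancel]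
    calc min (1 / β) a * β ≤ 1 / β * β := by gcongr; exact min_le_left _ _
      _ = 1 := by field_simp) t ht i x hx
  simp only [add_mulVec, smul_mulVec, one_mulVec, dotProduct_add, dotProduct_smul, hx,
    smul_eq_mul, mul_one] at h
  have hle : min (1 / β) a / Real.exp (k * T) * Real.exp (k * (T - t)) ≤ a := by
    refine le_trans ?_ (min_le_right (1 / β) a)
    refine le_trans ?_ hcancel.le
    have : k * (T - t) ≤ k * T := mul_le_mul_of_nonneg_left (by linarith [ht.1]) hk
    gcongr
  linarith

theorem IsRiccatiSolution.le_exp (hK : IsRiccatiSolution T A C B Q R m P K)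
    (hR : ∀ i, (R i).PosDef)
    (hm₁ : ∀ i j, i ≠ j → 0 ≤ m i j) (hm₂ : ∀ i, ∑ j, m i j = 0)
    (hA : ∀ i, ‖A i‖ ≤ M) (hC : ∀ i, ‖C i‖ ≤ M) (hQ : ∀ i, ‖Q i‖ ≤ M) {c : ℝ} (hc : 1 ≤ c)
    (hP : ∀ i, ∀ x : Fin d → ℝ, x ⬝ᵥ x = 1 → x ⬝ᵥ P i *ᵥ x < c)
    {t : ℝ} (ht : t ∈ Icc (0:ℝ) T) (i : Fin N) (x : Fin d → ℝ) :
    x ⬝ᵥ K t i *ᵥ x ≤ c * Real.exp ((3 * (d * M) ^ 2 + 3) * T) * (x ⬝ᵥ x) := by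
  obtain ⟨hsymm, hderiv, hfinal⟩ := hK
  let k : ℝ := 3 * (d * M) ^ 2 + 3
  have hk : 0 ≤ k := by positivity
  have hbarrier : ∀ t ∈ Icc (0:ℝ) T, ∀ i, ∀ x : Fin d → ℝ, x ⬝ᵥ x = 1 →
      0 < x ⬝ᵥ ((c * Real.exp (k * (T - t))) • (1 : Matrix (Fin d) (Fin d) ℝ) - K t i) *ᵥ x := by
    refine pos_of_backward_barrier
      (F' := fun t i => (-(k * (c * Real.exp (k * (T - t))))) • (1 : Matrix (Fin d) (Fin d) ℝ)
        - -(riccatiRHS A C B Q R m (K t) i)) ?_ ?_ ?_ ?_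
    · exact fun t ht i => (isSymm_one.smul _).sub (hsymm t ht i)
    · exact fun t ht i => ((hasDerivAt_mul_exp_backward c k T t).hasDerivWithinAt.smul_const
        _).sub (hderiv t ht i)
    · intro i x hx
      simp only [hfinal, sub_mulVec, smul_mulVec, one_mulVec, dotProduct_sub, dotProduct_smul, hx]
      simpa using hP i x hx
    · intro t ht i x hx hpos hker
      set θ := c * Real.exp (k * (T - t)) with hθ
      have hθ1 : 1 ≤ θ :=
        one_le_mul_of_one_le_of_one_le hc
          (Real.one_le_exp (mul_nonneg hk (sub_nonneg.2 ht.2)))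
      have hθ0 : 0 ≤ θ := zero_le_one.trans hθ1
      simp only [sub_mulVec, smul_mulVec, one_mulVec, dotProduct_sub, dotProduct_smul,
        smul_eq_mul] at hpos hker
      have heig : K t i *ᵥ x = θ • x := (sub_eq_zero.1 hker).symm
      have hKx : x ⬝ᵥ K t i *ᵥ x = θ := by simp [heig, hx]
      have hsum : 0 ≤ ∑ j, m i j * -(x ⬝ᵥ K t j *ᵥ x) :=
        generator_sum_nonneg (a := fun j => -(x ⬝ᵥ K t j *ᵥ x)) (hm₁ i) (hm₂ i) fun j => by
          have := hpos j x
          rw [hx] at this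
          linarith
      simp only [mul_neg, Finset.sum_neg_distrib] at hsum
      have hQx := (abs_le.1 (abs_two_mul_dotProduct_mulVec_le (hQ i) hx)).2
      have hCx := hpos i (C i *ᵥ x)
      have hCn := mul_le_mul_of_nonneg_left (mulVec_dotProduct_self_le (hC i) hx) hθ0
      have hAx := mul_le_mul_of_nonneg_left
        (abs_le.1 (abs_two_mul_dotProduct_mulVec_le (hA i) hx)).2 hθ0
      have hG := ((hR i).inv.posSemidef.mul_mul_conjTranspose_same (B i)).dotProduct_mulVec_nonneg x
      rw [star_trivial, conjTranspose_eq_transpose_of_trivial] at hG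
      have hGx := mul_nonneg (sq_nonneg θ) hG
      have hL : 1 + (d * M) ^ 2 ≤ θ * (1 + (d * M) ^ 2) :=
        le_mul_of_one_le_left (by positivity) hθ1
      have hkθ : k * θ = θ * (3 * (d * M) ^ 2 + 3) := mul_comm _ _
      rw [sub_mulVec, dotProduct_sub, neg_mulVec, dotProduct_neg, smul_mulVec, one_mulVec,
        dotProduct_smul, hx, dotProduct_riccatiRHS_mulVec_of_eigenvector (hsymm t ht i) heig,
        smul_eq_mul, hkθ]
      have hM2 := sq_nonneg (d * M)
      nlinarith
  refine dotProduct_mulVec_le_of_unit (fun x hx => ?_) x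
  have h := hbarrier t ht i x hx
  simp only [sub_mulVec, smul_mulVec, one_mulVec, dotProduct_sub, dotProduct_smul, hx,
    smul_eq_mul, mul_one] at h
  have hle : c * Real.exp (k * (T - t)) ≤ c * Real.exp (k * T) := by
    have : k * (T - t) ≤ k * T := mul_le_mul_of_nonneg_left (by linarith [ht.1]) hk
    gcongr
  linarith

end RiccatiBounds

/-- A priori bounds on the Riccati solutions, uniform over the approximating family. -/
theorem riccati_apriori_bounds
    (d l N : ℕ) (hd : 0 < d) (hl : 0 < l) (hN : 0 < N)
    (T : ℝ) (hT : 0 < T)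
    (A C Q : ℕ → Fin N → Matrix (Fin d) (Fin d) ℝ)
    (B : ℕ → Fin N → Matrix (Fin d) (Fin l) ℝ)
    (R : ℕ → Fin N → Matrix (Fin l) (Fin l) ℝ)
    (m : ℕ → Fin N → Fin N → ℝ)
    (P : Fin N → Matrix (Fin d) (Fin d) ℝ)
    (hQ : ∀ n i, (Q n i).PosSemidef)
    (hR : ∀ n i, (R n i).PosDef)
    (hP : ∀ i, (P i).PosDef)
    (hm₁ : ∀ n i j, i ≠ j → 0 ≤ m n i j)
    (hm₂ : ∀ n i, ∑ j, m n i j = 0)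
    (hbdd : ∃ M : ℝ, ∀ n i, ‖A n i‖ + ‖C n i‖ + ‖Q n i‖ ≤ M)
    (hmbdd : ∃ M : ℝ, ∀ n i j, |m n i j| ≤ M)
    (K : ℕ → ℝ → Fin N → Matrix (Fin d) (Fin d) ℝ)
    (hK : ∀ n, IsRiccatiSolution T (A n) (C n) (B n) (Q n) (R n) (m n) P (K n)) :
    ∃ C₀ > (0:ℝ), ∃ k₀ > (0:ℝ), ∀ n, ∀ t ∈ Icc (0:ℝ) T, ∀ (x : Fin d → ℝ), ∀ i,
      0 ≤ x ⬝ᵥ (K n t i).mulVec x ∧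
      x ⬝ᵥ (K n t i).mulVec x ≤ C₀ * Real.exp (k₀ * T) * (x ⬝ᵥ x) * (T + 1) ∧
      ‖K n t i‖ ≤ C₀ * Real.exp (k₀ * T) * (T + 1) := by
  obtain ⟨M, hM⟩ := hbdd
  have hA : ∀ n i, ‖A n i‖ ≤ M := fun n i => by
    linarith [hM n i, norm_nonneg (C n i), norm_nonneg (Q n i)]
  have hC : ∀ n i, ‖C n i‖ ≤ M := fun n i => by
    linarith [hM n i, norm_nonneg (A n i), norm_nonneg (Q n i)]
  have hQM : ∀ n i, ‖Q n i‖ ≤ M := fun n i => by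
    linarith [hM n i, norm_nonneg (A n i), norm_nonneg (C n i)]
  let c : ℝ := 1 + (d * ∑ i, ‖P i‖) ^ 2
  have hc : 1 ≤ c := le_add_of_nonneg_right (sq_nonneg _)
  have hPc : ∀ i, ∀ x : Fin d → ℝ, x ⬝ᵥ x = 1 → x ⬝ᵥ P i *ᵥ x < c := fun i x hx => by
    have h := abs_two_mul_dotProduct_mulVec_le
      (Finset.single_le_sum (f := fun i => ‖P i‖) (fun i _ => norm_nonneg _)
        (Finset.mem_univ i)) hx
    have := (abs_le.1 h).2
    change x ⬝ᵥ P i *ᵥ x < 1 + (d * ∑ i, ‖P i‖) ^ 2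
    linarith [sq_nonneg (d * ∑ i, ‖P i‖)]
  have hc0 : 0 < c := zero_lt_one.trans_le hc
  refine ⟨c, hc0, 3 * (d * M) ^ 2 + 3, by positivity, fun n t ht x i => ?_⟩
  have hlow := fun y => (hK n).nonneg (hQ n) hP (hm₁ n) (hm₂ n) (hA n) (hC n) ht i y
  have hup : ∀ y : Fin d → ℝ, y ⬝ᵥ K n t i *ᵥ y ≤
      c * Real.exp ((3 * (d * M) ^ 2 + 3) * T) * (T + 1) * (y ⬝ᵥ y) := fun y => by
    refine ((hK n).le_exp (hR n) (hm₁ n) (hm₂ n) (hA n) (hC n) (hQM n) hc hPc ht i y).trans ?_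
    have hy : 0 ≤ y ⬝ᵥ y := Finset.sum_nonneg fun j _ => mul_self_nonneg (y j)
    exact mul_le_mul_of_nonneg_right
      (le_mul_of_one_le_right (by positivity) (by linarith)) hy
  refine ⟨hlow x, (hup x).trans_eq (by ring), ?_⟩
  rw [norm_le_iff (by positivity)]
  exact abs_entry_le_of_quadratic_bounds ((hK n).1 t ht i) hlow hup
end
end
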